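/- For all integers i, j one has F_l^{(i,j)} > 0 for 0 ≤ l ≤ n, and for every integer k with 1 ≤ k ≤ n the following summation identities hold: Σ_{l=k}^{n} G_l^{(i,j)} F_l^{(i−1,j)} / ( F_l^{(i,j)} F_{l−1}^{(i,j)} ) = G_k^{(i−1,j)} / F_{k−1}^{(i,j)}, and Σ_{l=1}^{k} G_l^{(i,j)} F_{l−1}^{(i,j+1)} / ( F_l^{(i,j)} F_{l−1}^{(i,j)} ) = G_k^{(i,j+1)} / F_k^{(i,j)}. -/

import Mathlib

open Finset

/-- Single moments `α_i = Σ_p ζ_p^i a_p`. -/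
noncomputable def alphaM (n : ℕ) (ζ a : Fin n → ℝ) (i : ℤ) : ℝ :=
  ∑ p : Fin n, ζ p ^ i * a p

/-- Bimoments `I_{i,j} = Σ_p Σ_q ζ_p^i ζ_q^j / (ζ_p + ζ_q) a_p a_q`. -/
noncomputable def Imom (n : ℕ) (ζ a : Fin n → ℝ) (i j : ℤ) : ℝ :=
  ∑ p : Fin n, ∑ q : Fin n, ζ p ^ i * ζ q ^ j / (ζ p + ζ q) * (a p * a q)

/-- `F_k^{(i,j)} = det (I_{i+r,j+s})_{0 ≤ r,s ≤ k-1}`, with `F_0 = 1` and `F_k = 0` for `k < 0`. -/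
noncomputable def Fdet (n : ℕ) (ζ a : Fin n → ℝ) (i j k : ℤ) : ℝ :=
  if k < 0 then 0
  else Matrix.det (Matrix.of fun r s : Fin k.toNat =>
    Imom n ζ a (i + ((r : ℕ) : ℤ)) (j + ((s : ℕ) : ℤ)))

/-- `G_k^{(i,j)}`: first column `(α_{i-1}, …, α_{i+k-2})ᵀ`, remaining block
`(I_{i+r,j+s})_{0 ≤ r ≤ k-1, 0 ≤ s ≤ k-2}`; `G_1 = α_{i-1}` and `G_k = 0` for `k < 1`. -/
noncomputable def Gdet (n : ℕ) (ζ a : Fin n → ℝ) (i j k : ℤ) : ℝ :=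
  if k < 1 then 0
  else Matrix.det (Matrix.of fun r s : Fin k.toNat =>
    if (s : ℕ) = 0 then alphaM n ζ a (i - 1 + ((r : ℕ) : ℤ))
    else Imom n ζ a (i + ((r : ℕ) : ℤ)) (j + (((s : ℕ) - 1 : ℕ) : ℤ)))

/-- `E_k^{(i,j)}`: `(1,1)` entry `0`, first row `(0, α_{j-1}, …, α_{j+k-3})`, first column
`(0, α_{i-1}, …, α_{i+k-3})ᵀ`, remaining block `(I_{i+r,j+s})_{0 ≤ r,s ≤ k-2}`;
`E_k = 0` for `k < 2`. -/
noncomputable def Edet (n : ℕ) (ζ a : Fin n → ℝ) (i j k : ℤ) : ℝ :=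
  if k < 2 then 0
  else Matrix.det (Matrix.of fun r s : Fin k.toNat =>
    if (r : ℕ) = 0 then
      (if (s : ℕ) = 0 then 0 else alphaM n ζ a (j - 1 + (((s : ℕ) - 1 : ℕ) : ℤ)))
    else if (s : ℕ) = 0 then alphaM n ζ a (i - 1 + (((r : ℕ) - 1 : ℕ) : ℤ))
    else Imom n ζ a (i + (((r : ℕ) - 1 : ℕ) : ℤ)) (j + (((s : ℕ) - 1 : ℕ) : ℤ)))

lemma aux_detP {R : Type*} [CommRing R] (m : ℕ) (u w : Fin (m+2) → R) :
    Matrix.det (Matrix.of fun i j : Fin (m+2) =>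
      if j = 0 then u i else if j = Fin.last (m+1) then w i else if i = j then 1 else 0) =
    u 0 * w (Fin.last _) - w 0 * u (Fin.last _) := by
  have h00 : Matrix.det ((Matrix.of fun i j : Fin (m+2) =>
      if j = 0 then u i else if j = Fin.last (m+1) then w i else if i = j then 1 else 0).submatrix
        Fin.succ Fin.succ) = w (Fin.last _) := by
    rw [Matrix.det_succ_row _ (Fin.last m), Finset.sum_eq_single (Fin.last m)]
    · have : (Matrix.submatrix (Matrix.submatrix (Matrix.of fun i j : Fin (m+2) =>
      if j = 0 then u i else if j = Fin.last (m+1) then w i else if i = j then (1:R) else 0)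
        Fin.succ Fin.succ) (Fin.last m).succAbove (Fin.last m).succAbove) = 1 := by
        ext i j
        simp [Matrix.one_apply, Fin.ext_iff, -Fin.val_eq_zero_iff]
        intro h
        omega
      rw [this]
      simp [Fin.ext_iff, -Fin.val_eq_zero_iff]
    · intro j _ hj
      have : (j : ℕ) ≠ m := fun h => hj (Fin.ext h)
      simp [Fin.ext_iff, -Fin.val_eq_zero_iff, this, this.symm]
    · simp
  have h0l : Matrix.det ((Matrix.of fun i j : Fin (m+2) =>
      if j = 0 then u i else if j = Fin.last (m+1) then w i else if i = j then 1 else 0).submatrix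
        Fin.succ Fin.castSucc) = (-1)^m * u (Fin.last _) := by
    rw [Matrix.det_succ_row _ (Fin.last m), Finset.sum_eq_single 0]
    · have : (Matrix.submatrix (Matrix.submatrix (Matrix.of fun i j : Fin (m+2) =>
      if j = 0 then u i else if j = Fin.last (m+1) then w i else if i = j then (1:R) else 0)
        Fin.succ Fin.castSucc) (Fin.last m).succAbove (Fin.succAbove 0)) = 1 := by
        ext i j
        simp [Matrix.one_apply, Fin.ext_iff, -Fin.val_eq_zero_iff]
        intro h
        omega
      rw [this]
      simp [Fin.ext_iff, -Fin.val_eq_zero_iff]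
    · intro j _ hj
      have h0 : (j : ℕ) ≠ 0 := fun h => hj (Fin.ext h)
      have := j.2
      have h1 : (j : ℕ) ≠ m + 1 := by omega
      simp [Fin.ext_iff, -Fin.val_eq_zero_iff, h0, h1, h1.symm]
    · simp
  rw [Matrix.det_succ_row_zero, Fin.sum_univ_succ, Fin.sum_univ_castSucc, Finset.sum_eq_zero]
  · simp only [Fin.succAbove_zero, h00, Fin.succ_last, Fin.succAbove_last, h0l]
    have : ((-1:R)^m) * (-1)^m = 1 := by rw [← pow_add, ← two_mul, pow_mul]; simp
    simp [Fin.ext_iff, -Fin.val_eq_zero_iff, pow_succ]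
    linear_combination (- w 0 * u (Fin.last _)) * this
  · intro j _
    have := j.2
    have h1 : (j : ℕ) ≠ m := by omega
    simp [Fin.ext_iff, -Fin.val_eq_zero_iff, h1]

lemma aux_detQ {R : Type*} [CommRing R] (m : ℕ) (d : R) (M : Matrix (Fin (m+2)) (Fin (m+2)) R) :
    Matrix.det (Matrix.of fun i j : Fin (m+2) =>
      if j = 0 then (if i = 0 then d else 0) else if j = Fin.last (m+1) then
        (if i = Fin.last (m+1) then d else 0) else M i j) =
    d * d * Matrix.det (M.submatrix (fun i : Fin m => i.castSucc.succ)
      (fun i : Fin m => i.castSucc.succ)) := by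
  rw [Matrix.det_succ_column_zero, Finset.sum_eq_single 0]
  · rw [Matrix.det_succ_column _ (Fin.last m), Finset.sum_eq_single (Fin.last m)]
    · have : ((-1:R)^m) * (-1)^m = 1 := by rw [← pow_add, ← two_mul, pow_mul]; simp
      have h2 : ∀ x y : R, x = y → d * ((-1)^m * (-1)^m * d * x) = d * d * y := by
        rintro x y rfl; linear_combination d * d * x * this
      simp [Fin.ext_iff, -Fin.val_eq_zero_iff, pow_add]
      apply h2
      congr 1
      ext i j
      have := j.2
      simp [Fin.ext_iff, -Fin.val_eq_zero_iff]
      intro h; omega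
    · intro j _ hj
      have : (j : ℕ) ≠ m := fun h => hj (Fin.ext h)
      simp [Fin.ext_iff, -Fin.val_eq_zero_iff, this]
    · simp
  · intro j _ hj
    simp [hj]
  · simp

lemma desnanot_dom {R : Type*} [CommRing R] [IsDomain R] (m : ℕ)
    (M : Matrix (Fin (m+2)) (Fin (m+2)) R) (hM : M.det ≠ 0) :
    M.det * (M.submatrix (fun i : Fin m => i.castSucc.succ) (fun i : Fin m => i.castSucc.succ)).det
    = (M.submatrix Fin.succ Fin.succ).det * (M.submatrix Fin.castSucc Fin.castSucc).det
      - (M.submatrix Fin.succ Fin.castSucc).det * (M.submatrix Fin.castSucc Fin.succ).det := by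
  apply mul_left_cancel₀ hM
  rw [← mul_assoc, ← aux_detQ]
  have h := aux_detP m (fun i => M.adjugate i 0) (fun i => M.adjugate i (Fin.last _))
  have e : ∀ k : ℕ, ((-1:R)^k) * (-1)^k = 1 := by
    intro k; rw [← pow_add, ← two_mul, pow_mul]; simp
  simp only [Matrix.adjugate_fin_succ_eq_det_submatrix, Fin.succAbove_zero, Fin.succAbove_last] at h
  simp only [Fin.val_zero, Fin.val_last, pow_add, pow_zero, one_mul, mul_one, pow_one] at h
  have h3 : (M.submatrix Fin.succ Fin.succ).det * (M.submatrix Fin.castSucc Fin.castSucc).det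
      - (M.submatrix Fin.succ Fin.castSucc).det * (M.submatrix Fin.castSucc Fin.succ).det
      = ((M.submatrix Fin.succ Fin.succ).det *
        ((-1) ^ m * -1 * ((-1) ^ m * -1) * (M.submatrix Fin.castSucc Fin.castSucc).det) -
      (-1) ^ m * -1 * (M.submatrix Fin.castSucc Fin.succ).det *
        ((-1) ^ m * -1 * (M.submatrix Fin.succ Fin.castSucc).det)) := by
    linear_combination ((M.submatrix Fin.succ Fin.castSucc).det *
      (M.submatrix Fin.castSucc Fin.succ).det - (M.submatrix Fin.succ Fin.succ).det *
        (M.submatrix Fin.castSucc Fin.castSucc).det) * (e m)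
  rw [h3, ← h, ← Matrix.det_mul]
  congr 1
  ext i j
  have key : ∀ k, ∑ x, M i x * M.adjugate x k = if i = k then M.det else 0 := by
    intro k
    rw [← Matrix.mul_apply, Matrix.mul_adjugate]
    simp [Matrix.one_apply]
  rw [Matrix.mul_apply]
  by_cases h0 : j = 0
  · subst h0
    have := key 0
    simp only [Matrix.adjugate_fin_succ_eq_det_submatrix, Fin.succAbove_zero] at this
    simp [← this]
  · by_cases hl : j = Fin.last _
    · subst hl
      have := key (Fin.last _)
      simp only [Matrix.adjugate_fin_succ_eq_det_submatrix, Fin.succAbove_last] at this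
      simp [← this, pow_add]
    · simp [h0, hl]

lemma desnanot {R : Type*} [CommRing R] (m : ℕ)
    (M : Matrix (Fin (m+2)) (Fin (m+2)) R) :
    M.det * (M.submatrix (fun i : Fin m => i.castSucc.succ) (fun i : Fin m => i.castSucc.succ)).det
    = (M.submatrix Fin.succ Fin.succ).det * (M.submatrix Fin.castSucc Fin.castSucc).det
      - (M.submatrix Fin.succ Fin.castSucc).det * (M.submatrix Fin.castSucc Fin.succ).det := by
  have h := desnanot_dom m (Matrix.mvPolynomialX (Fin (m+2)) (Fin (m+2)) ℤ)
    (Matrix.det_mvPolynomialX_ne_zero _ _)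
  have := congrArg (MvPolynomial.eval₂Hom (Int.castRingHom R) (fun p : Fin (m+2) × Fin (m+2) => M p.1 p.2)) h
  simp only [map_mul, map_sub, RingHom.map_det, RingHom.mapMatrix_apply, ← Matrix.submatrix_map] at this
  have e : (Matrix.mvPolynomialX (Fin (m+2)) (Fin (m+2)) ℤ).map
    (MvPolynomial.eval₂Hom (Int.castRingHom R) (fun p : Fin (m+2) × Fin (m+2) => M p.1 p.2)) = M :=
    Matrix.mvPolynomialX_map_eval₂ _ M
  simpa only [e] using this

lemma andreief {R : Type*} [CommRing R] {k n : ℕ} (A : Matrix (Fin k) (Fin n) R)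
    (B : Matrix (Fin n) (Fin k) R) :
    (k.factorial : R) * (A * B).det =
      ∑ p : Fin k → Fin n, (A.submatrix id p).det * (B.submatrix p id).det := by
  have h1 : (A * B).det = ∑ p : Fin k → Fin n, (∏ r, A r (p r)) * (B.submatrix p id).det := by
    have : (A * B) = fun r => ∑ q : Fin n, A r q • B q := by
      ext r s; simp [Matrix.mul_apply]
    rw [this]
    change Matrix.detRowAlternating (fun r => ∑ q : Fin n, A r q • B q) = _
    rw [← AlternatingMap.coe_multilinearMap, MultilinearMap.map_sum]
    refine Finset.sum_congr rfl fun p _ => ?_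
    rw [MultilinearMap.map_smul_univ]
    rfl
  have h2 : ∀ σ : Equiv.Perm (Fin k), (A * B).det = ∑ p : Fin k → Fin n,
      ((Equiv.Perm.sign σ : ℤ) : R) * (∏ r, A r (p (σ r))) * (B.submatrix p id).det := by
    intro σ
    rw [h1, ← (Equiv.arrowCongr σ.symm (Equiv.refl (Fin n))).sum_comp]
    refine Finset.sum_congr rfl fun p _ => ?_
    have : (B.submatrix (Equiv.arrowCongr σ.symm (Equiv.refl (Fin n)) p) id) =
        (B.submatrix p id).submatrix σ id := by
      ext i j; simp
    rw [this, Matrix.det_permute]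
    simp
    ring
  have h3 : ∑ σ : Equiv.Perm (Fin k), (A * B).det = (k.factorial : R) * (A * B).det := by
    simp [Fintype.card_perm]
  rw [← h3, Finset.sum_congr rfl fun σ _ => h2 σ, Finset.sum_comm]
  refine Finset.sum_congr rfl fun p _ => ?_
  rw [← Finset.sum_mul, ← Matrix.det_transpose (A.submatrix id p),
    Matrix.det_apply' (A.submatrix id p).transpose]
  rfl

lemma cauchy_det (k : ℕ) (x y : Fin k → ℝ) (hx : ∀ i, 0 < x i) (hy : ∀ i, 0 < y i) :
    ∃ c : ℝ, 0 < c ∧ Matrix.det (Matrix.of fun i j => 1 / (x i + y j)) =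
      c * (Matrix.vandermonde x).det * (Matrix.vandermonde y).det := by
  induction k with
  | zero => exact ⟨1, one_pos, by simp⟩
  | succ k ih =>
    obtain ⟨c, hc, h⟩ := ih (fun i => x i.succ) (fun i => y i.succ) (fun i => hx _) (fun i => hy _)
    have hp : ∀ i j, 0 < x i + y j := fun i j => add_pos (hx i) (hy j)
    have hvs : ∀ z : Fin (k+1) → ℝ, (Matrix.vandermonde z).det =
      (∏ i : Fin k, (z i.succ - z 0)) * (Matrix.vandermonde (fun i => z i.succ)).det := by
      intro z
      simp only [Matrix.det_vandermonde, Fin.prod_univ_succ, Fin.Ioi_zero_eq_map, Finset.prod_map,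
        Fin.coe_succEmb, Fin.prod_Ioi_succ]
    refine ⟨1 / (x 0 + y 0) * (∏ i : Fin k, (1 / (x i.succ + y 0))) *
      (∏ j : Fin k, (1 / (x 0 + y j.succ))) * c, ?_, ?_⟩
    · have := hp 0 0
      have h1 : 0 < ∏ i : Fin k, (1 / (x i.succ + y 0)) :=
        Finset.prod_pos fun i _ => one_div_pos.2 (hp _ _)
      have h2 : 0 < ∏ i : Fin k, (1 / (x 0 + y i.succ)) :=
        Finset.prod_pos fun i _ => one_div_pos.2 (hp _ _)
      positivity
    · let B : Matrix (Fin (k+1)) (Fin (k+1)) ℝ := Matrix.of fun i j =>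
        if i = 0 then 1 / (x 0 + y j) else
          (x i - x 0) * (y j - y 0) / ((x i + y j) * (x i + y 0) * (x 0 + y j))
      rw [Matrix.det_eq_of_forall_row_eq_smul_add_const (B := B)
        (fun i => if i = 0 then 0 else (x 0 + y 0) / (x i + y 0)) 0 (by simp)]
      · rw [Matrix.det_succ_column_zero, Finset.sum_eq_single 0]
        · have : B.submatrix (Fin.succAbove 0) Fin.succ = Matrix.of fun i j =>
            ((x i.succ - x 0) * (1 / (x i.succ + y 0))) * (Matrix.of fun i j =>
              ((y j.succ - y 0) * (1 / (x 0 + y j.succ))) * (Matrix.of (fun i j : Fin k => 1 / (x i.succ + y j.succ))) i j) i j := by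
            ext i j
            have := (hp i.succ j.succ).ne'
            have := (hp i.succ 0).ne'
            have := (hp 0 j.succ).ne'
            simp [B]
            field_simp
          rw [this, Matrix.det_mul_column, Matrix.det_mul_row, h, hvs x, hvs y]
          simp only [Finset.prod_mul_distrib]
          simp [B]
          ring
        · intro i _ hi
          simp [B, hi]
        · simp
      · intro i j
        by_cases hi : i = 0
        · simp [B, hi]
        · have := (hp i j).ne'
          have := (hp i 0).ne'
          have := (hp 0 j).ne'
          simp [B, hi]
          field_simp
          ring

section momentDets

variable (n : ℕ) (ζ a : Fin n → ℝ)

lemma Fdet_nat (i j : ℤ) (k : ℕ) : Fdet n ζ a i j (k : ℤ) =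
    Matrix.det (Matrix.of fun r s : Fin k =>
      Imom n ζ a (i + ((r : ℕ) : ℤ)) (j + ((s : ℕ) : ℤ))) := by
  unfold Fdet
  rw [if_neg (by omega)]
  rfl

lemma Gdet_nat (i j : ℤ) (k : ℕ) : Gdet n ζ a i j ((k + 1 : ℕ) : ℤ) =
    Matrix.det (Matrix.of fun r s : Fin (k + 1) =>
      if (s : ℕ) = 0 then alphaM n ζ a (i - 1 + ((r : ℕ) : ℤ))
      else Imom n ζ a (i + ((r : ℕ) : ℤ)) (j + (((s : ℕ) - 1 : ℕ) : ℤ))) := by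
  unfold Gdet
  rw [if_neg (by omega)]
  rfl

lemma Fdet_pos (hζ0 : ∀ p, 0 < ζ p) (hζmono : StrictMono ζ) (ha : ∀ p, 0 < a p)
    (i j : ℤ) (k : ℕ) (hk : k ≤ n) : 0 < Fdet n ζ a i j (k : ℤ) := by
  rw [Fdet_nat]
  let A : ℤ → Matrix (Fin k) (Fin n) ℝ := fun i => Matrix.of fun r p => ζ p ^ (i + ((r : ℕ) : ℤ)) * a p
  let K : Matrix (Fin n) (Fin n) ℝ := Matrix.of fun p q => 1 / (ζ p + ζ q)
  have hF : (Matrix.of fun r s : Fin k =>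
      Imom n ζ a (i + ((r : ℕ) : ℤ)) (j + ((s : ℕ) : ℤ))) = A i * (K * (A j).transpose) := by
    ext r s
    simp only [Matrix.of_apply, Matrix.mul_apply, Imom, Matrix.transpose_apply, A, K,
      Finset.mul_sum]
    refine Finset.sum_congr rfl fun p _ => Finset.sum_congr rfl fun q _ => ?_
    ring
  rw [hF]
  have hA : ∀ (i : ℤ) (p : Fin k → Fin n), ((A i).submatrix id p).det =
      (∏ r, (ζ (p r) ^ i * a (p r))) * (Matrix.vandermonde (fun r => ζ (p r))).det := by
    intro i p
    rw [← Matrix.det_transpose, ← Matrix.det_mul_column]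
    congr 1
    ext r s
    simp only [A, Matrix.transpose_apply, Matrix.submatrix_apply, Matrix.of_apply, id,
      Matrix.vandermonde_apply]
    rw [zpow_add₀ (hζ0 _).ne', zpow_natCast]
    ring
  have hpr : ∀ (i : ℤ) (p : Fin k → Fin n), 0 < ∏ r, (ζ (p r) ^ i * a (p r)) := fun i p =>
    Finset.prod_pos fun r _ => mul_pos (zpow_pos (hζ0 _) _) (ha _)
  have hterm : ∀ p q : Fin k → Fin n, ∃ c : ℝ, 0 < c ∧
      ((A i).submatrix id p).det * (((K.submatrix p q)).det * ((A j).transpose.submatrix q id).det)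
      = c * ((Matrix.vandermonde (fun r => ζ (p r))).det ^ 2 *
        (Matrix.vandermonde (fun r => ζ (q r))).det ^ 2) := by
    intro p q
    obtain ⟨c, hc, h⟩ := cauchy_det k (fun r => ζ (p r)) (fun r => ζ (q r)) (fun r => hζ0 _)
      (fun r => hζ0 _)
    have h' : (K.submatrix p q).det = _ := h
    have hB : ((A j).transpose.submatrix q id).det = ((A j).submatrix id q).det := by
      rw [← Matrix.det_transpose]; rfl
    refine ⟨c * (∏ r, (ζ (p r) ^ i * a (p r))) * (∏ r, (ζ (q r) ^ j * a (q r))),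
      mul_pos (mul_pos hc (hpr _ _)) (hpr _ _), ?_⟩
    rw [h', hB, hA, hA]
    ring
  have hsum : (k.factorial : ℝ) * ((k.factorial : ℝ) * (A i * (K * (A j).transpose)).det) =
      ∑ p : Fin k → Fin n, ∑ q : Fin k → Fin n, ((A i).submatrix id p).det *
        (((K.submatrix p q)).det * ((A j).transpose.submatrix q id).det) := by
    rw [andreief, Finset.mul_sum]
    refine Finset.sum_congr rfl fun p _ => ?_
    have : (K * (A j).transpose).submatrix p id = K.submatrix p id * (A j).transpose := by
      ext; simp [Matrix.mul_apply]
    rw [this, mul_left_comm, andreief, Finset.mul_sum]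
    rfl
  have hnn : ∀ p q : Fin k → Fin n, 0 ≤ ((A i).submatrix id p).det *
        (((K.submatrix p q)).det * ((A j).transpose.submatrix q id).det) := by
    intro p q
    obtain ⟨c, hc, h⟩ := hterm p q
    rw [h]; positivity
  have hpos : 0 < ∑ p : Fin k → Fin n, ∑ q : Fin k → Fin n, ((A i).submatrix id p).det *
        (((K.submatrix p q)).det * ((A j).transpose.submatrix q id).det) := by
    have hv : (Matrix.vandermonde (fun r => ζ (Fin.castLE hk r))).det ≠ 0 :=
      Matrix.det_vandermonde_ne_zero_iff.2
        (hζmono.injective.comp (Fin.castLE_injective hk))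
    refine Finset.sum_pos' (fun p _ => Finset.sum_nonneg fun q _ => hnn p q)
      ⟨Fin.castLE hk, Finset.mem_univ _, ?_⟩
    refine Finset.sum_pos' (fun q _ => hnn _ q) ⟨Fin.castLE hk, Finset.mem_univ _, ?_⟩
    obtain ⟨c, hc, h⟩ := hterm (Fin.castLE hk) (Fin.castLE hk)
    rw [h]; positivity
  rw [← hsum] at hpos
  have hf : (0 : ℝ) < k.factorial := by exact_mod_cast k.factorial_pos
  exact (mul_pos_iff_of_pos_left hf).1 ((mul_pos_iff_of_pos_left hf).1 hpos)

lemma Gdet_top (hζ0 : ∀ p, 0 < ζ p) (i j : ℤ) : Gdet n ζ a i j ((n + 1 : ℕ) : ℤ) = 0 := by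
  rw [Gdet_nat]
  let A : Matrix (Fin (n+1)) (Fin n) ℝ := Matrix.of fun r p => ζ p ^ (i + ((r : ℕ) : ℤ)) * a p
  let B : Matrix (Fin n) (Fin (n+1)) ℝ := Matrix.of fun p s =>
    if (s : ℕ) = 0 then (ζ p)⁻¹ else
      ∑ q : Fin n, ζ q ^ (j + (((s : ℕ) - 1 : ℕ) : ℤ)) / (ζ p + ζ q) * a q
  have hG : (Matrix.of fun r s : Fin (n + 1) =>
      if (s : ℕ) = 0 then alphaM n ζ a (i - 1 + ((r : ℕ) : ℤ))
      else Imom n ζ a (i + ((r : ℕ) : ℤ)) (j + (((s : ℕ) - 1 : ℕ) : ℤ))) = A * B := by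
    ext r s
    simp only [Matrix.of_apply, Matrix.mul_apply, A, B]
    split_ifs with h
    · unfold alphaM
      refine Finset.sum_congr rfl fun p _ => ?_
      rw [show i - 1 + ((r : ℕ) : ℤ) = (i + ((r : ℕ) : ℤ)) - 1 by ring, zpow_sub_one₀ (hζ0 p).ne']
      ring
    · unfold Imom
      refine Finset.sum_congr rfl fun p _ => ?_
      rw [Finset.mul_sum]
      refine Finset.sum_congr rfl fun q _ => ?_
      ring
  rw [hG]
  have h := andreief A B
  rw [Finset.sum_eq_zero] at h
  · have hf : (((n+1).factorial : ℕ) : ℝ) ≠ 0 := by exact_mod_cast (n+1).factorial_ne_zero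
    exact (mul_eq_zero.1 h).resolve_left hf
  · intro p _
    have : ¬ Function.Injective p := fun hp => by
      have := Fintype.card_le_of_injective p hp
      simp at this
    simp only [Function.Injective, not_forall] at this
    obtain ⟨x, y, hxy, hne⟩ := this
    rw [Matrix.det_zero_of_column_eq hne, zero_mul]
    intro r
    simp [hxy]

lemma ident_one (i j : ℤ) (m : ℕ) :
    Gdet n ζ a (i - 1) j ((m + 1 + 1 : ℕ) : ℤ) * Fdet n ζ a i j (m : ℤ) =
      Fdet n ζ a i j ((m + 1 : ℕ) : ℤ) * Gdet n ζ a (i - 1) j ((m + 1 : ℕ) : ℤ) -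
      Gdet n ζ a i j ((m + 1 : ℕ) : ℤ) * Fdet n ζ a (i - 1) j ((m + 1 : ℕ) : ℤ) := by
  simp only [Gdet_nat, Fdet_nat]
  have h := desnanot m (Matrix.of fun r s : Fin (m + 1 + 1) =>
      if (s : ℕ) = 0 then alphaM n ζ a (i - 1 - 1 + ((r : ℕ) : ℤ))
      else Imom n ζ a (i - 1 + ((r : ℕ) : ℤ)) (j + (((s : ℕ) - 1 : ℕ) : ℤ)))
  have e : ∀ r : ℕ, i - 1 + ((r : ℤ) + 1) = i + r := fun r => by ring
  have e' : ∀ r : ℕ, i - 1 - 1 + ((r : ℤ) + 1) = i - 1 + r := fun r => by ring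
  simpa [Matrix.submatrix, -Fin.val_eq_zero_iff, e, e'] using h

lemma det_row_unit {R : Type*} [CommRing R] (q : ℕ) (M : Matrix (Fin (q + 2)) (Fin (q + 2)) R)
    (hM : ∀ s, M 0 s = if (s : ℕ) = 1 then 1 else 0) :
    M.det = - (M.submatrix Fin.succ (Fin.succAbove 1)).det := by
  rw [Matrix.det_succ_row_zero, Finset.sum_eq_single 1]
  · rw [hM]; simp
  · intro s _ hs
    rw [hM, if_neg]
    · simp
    · intro h; exact hs (Fin.ext h)
  · simp

lemma succAbove_one_val (q : ℕ) (s : Fin (q + 1)) :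
    ((Fin.succAbove (1 : Fin (q + 2)) s : Fin (q + 2)) : ℕ) = if (s : ℕ) = 0 then 0 else (s : ℕ) + 1 := by
  rw [Fin.succAbove]
  simp only [Fin.lt_def]
  simp [-Fin.val_eq_zero_iff]
  split_ifs with h <;> simp [-Fin.val_eq_zero_iff, h]

lemma ident_two (i j : ℤ) (m : ℕ) :
    Gdet n ζ a i (j + 1) ((m + 1 : ℕ) : ℤ) * Fdet n ζ a i j (m : ℤ) =
      Fdet n ζ a i j ((m + 1 : ℕ) : ℤ) * Gdet n ζ a i (j + 1) (m : ℤ) +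
      Gdet n ζ a i j ((m + 1 : ℕ) : ℤ) * Fdet n ζ a i (j + 1) (m : ℤ) := by
  let N : Matrix (Fin (m + 1 + 1)) (Fin (m + 1 + 1)) ℝ := Matrix.of fun r s =>
    if (r : ℕ) = 0 then (if (s : ℕ) = 1 then 1 else 0)
    else if (s : ℕ) = 0 then alphaM n ζ a (i - 1 + (((r : ℕ) - 1 : ℕ) : ℤ))
    else Imom n ζ a (i + (((r : ℕ) - 1 : ℕ) : ℤ)) (j + (((s : ℕ) - 1 : ℕ) : ℤ))
  have h := desnanot m N
  have hcol : ∀ (q r : ℕ) (s : Fin (q+1)), (if (Fin.succAbove (1 : Fin (q + 2)) s : ℕ) = 0 then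
        alphaM n ζ a (i - 1 + (r : ℤ))
      else Imom n ζ a (i + (r : ℤ))
        (j + (((Fin.succAbove (1 : Fin (q + 2)) s : ℕ) - 1 : ℕ) : ℤ))) =
      if (s : ℕ) = 0 then alphaM n ζ a (i - 1 + (r : ℤ))
      else Imom n ζ a (i + (r : ℤ)) (j + 1 + (((s : ℕ) - 1 : ℕ) : ℤ)) := by
    intro q r s
    rw [succAbove_one_val]
    by_cases hs : (s : ℕ) = 0
    · simp [hs]
    · simp only [hs, if_false]
      rw [if_neg (by omega)]
      congr 1
      omega
  have h1 : N.det = - Gdet n ζ a i (j + 1) ((m + 1 : ℕ) : ℤ) := by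
    rw [det_row_unit _ _ (fun s => by simp [N]), Gdet_nat]
    congr 2
    ext r s
    have := hcol m r s
    simpa [N, -Fin.val_eq_zero_iff] using this
  have h2 : (N.submatrix (fun i : Fin m => i.castSucc.succ) (fun i : Fin m => i.castSucc.succ)).det
      = Fdet n ζ a i j (m : ℤ) := by
    rw [Fdet_nat]; congr 1
  have h3 : (N.submatrix Fin.succ Fin.succ).det = Fdet n ζ a i j ((m + 1 : ℕ) : ℤ) := by
    rw [Fdet_nat]; congr 1
  have h4 : (N.submatrix Fin.succ Fin.castSucc).det = Gdet n ζ a i j ((m + 1 : ℕ) : ℤ) := by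
    rw [Gdet_nat]; congr 1
  have h5 : (N.submatrix Fin.castSucc Fin.succ).det = Fdet n ζ a i (j + 1) (m : ℤ) := by
    rw [Matrix.det_succ_row_zero, Finset.sum_eq_single 0, Fdet_nat]
    · have : ((N.submatrix Fin.castSucc Fin.succ).submatrix Fin.succ (Fin.succAbove 0)) =
        (Matrix.of fun r s : Fin m =>
          Imom n ζ a (i + ((r : ℕ) : ℤ)) (j + 1 + ((s : ℕ) : ℤ))) := by
        ext r s
        simp [N]
        congr 1; ring
      rw [this]
      simp [N]
    · intro s _ hs
      have : (s : ℕ) ≠ 0 := fun h => hs (Fin.ext h)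
      simp [N, this]
    · simp
  have h6 : (N.submatrix Fin.castSucc Fin.castSucc).det = - Gdet n ζ a i (j + 1) (m : ℤ) := by
    cases m with
    | zero => simp [N, Gdet]
    | succ q =>
      rw [det_row_unit _ _ (fun s => by simp [N]), Gdet_nat]
      congr 2
      ext r s
      have := hcol q r s
      simpa [N, -Fin.val_eq_zero_iff] using this
  rw [h1, h2, h3, h4, h5, h6] at h
  linear_combination - h

end momentDets

lemma sum_telescope (f g : ℤ → ℝ) (k m : ℤ) (hkm : k ≤ m)
    (h : ∀ l, k ≤ l → l ≤ m → f l = g l - g (l + 1)) :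
    ∑ l ∈ Finset.Icc k m, f l = g k - g (m + 1) := by
  induction m, hkm using Int.leInduction with
  | base => simp [h k le_rfl le_rfl]
  | succ m hm ih =>
    have : Finset.Icc k (m + 1) = insert (m + 1) (Finset.Icc k m) := by
      ext x; simp only [Finset.mem_Icc, Finset.mem_insert]; omega
    rw [this, Finset.sum_insert (by simp), ih (fun l h1 h2 => h l h1 (by omega)),
      h (m + 1) (by omega) le_rfl]
    ring

/-- Corollary 2.9: positivity of `F_l^{(i,j)}` for `0 ≤ l ≤ n`, and for `1 ≤ k ≤ n` the
summation identities
`Σ_{l=k}^{n} G_l^{(i,j)} F_l^{(i-1,j)} / (F_l^{(i,j)} F_{l-1}^{(i,j)}) = G_k^{(i-1,j)} / F_{k-1}^{(i,j)}`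
and
`Σ_{l=1}^{k} G_l^{(i,j)} F_{l-1}^{(i,j+1)} / (F_l^{(i,j)} F_{l-1}^{(i,j)}) = G_k^{(i,j+1)} / F_k^{(i,j)}`. -/
theorem stmt_11 (n : ℕ) (hn : 1 ≤ n) (ζ a : Fin n → ℝ)
    (hζ0 : ∀ p, 0 < ζ p) (hζmono : StrictMono ζ) (ha : ∀ p, 0 < a p) :
    (∀ i j l : ℤ, 0 ≤ l → l ≤ (n : ℤ) → 0 < Fdet n ζ a i j l) ∧
    (∀ i j k : ℤ, 1 ≤ k → k ≤ (n : ℤ) →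
      (∑ l ∈ Finset.Icc k (n : ℤ),
          Gdet n ζ a i j l * Fdet n ζ a (i - 1) j l /
            (Fdet n ζ a i j l * Fdet n ζ a i j (l - 1))) =
        Gdet n ζ a (i - 1) j k / Fdet n ζ a i j (k - 1) ∧
      (∑ l ∈ Finset.Icc (1 : ℤ) k,
          Gdet n ζ a i j l * Fdet n ζ a i (j + 1) (l - 1) /
            (Fdet n ζ a i j l * Fdet n ζ a i j (l - 1))) =
        Gdet n ζ a i (j + 1) k / Fdet n ζ a i j k) := by
  have hpos : ∀ i j l : ℤ, 0 ≤ l → l ≤ (n : ℤ) → 0 < Fdet n ζ a i j l := by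
    intro i j l h0 h1
    lift l to ℕ using h0
    exact Fdet_pos n ζ a hζ0 hζmono ha i j l (by exact_mod_cast h1)
  refine ⟨hpos, fun i j k hk1 hkn => ⟨?_, ?_⟩⟩
  · rw [sum_telescope _ (fun l => Gdet n ζ a (i - 1) j l / Fdet n ζ a i j (l - 1)) k n hkn]
    · have := Gdet_top n ζ a hζ0 (i - 1) j
      push_cast at this
      simp [this]
    · intro l hl1 hl2
      have p1 := (hpos i j l (by omega) hl2).ne'
      have p2 := (hpos i j (l - 1) (by omega) (by omega)).ne'
      obtain ⟨m, rfl⟩ : ∃ m : ℕ, l = m + 1 := ⟨(l - 1).toNat, by omega⟩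
      have h := ident_one n ζ a i j m
      push_cast at h
      simp only [add_sub_cancel_right] at p2 ⊢
      rw [div_sub_div _ _ p2 p1, div_eq_div_iff (mul_ne_zero p1 p2) (mul_ne_zero p2 p1)]
      linear_combination ((Fdet n ζ a i j (m + 1)) * (Fdet n ζ a i j m)) * h
  · rw [sum_telescope _ (fun l => - (Gdet n ζ a i (j + 1) (l - 1) / Fdet n ζ a i j (l - 1))) 1 k hk1]
    · have h0 : Gdet n ζ a i (j + 1) 0 = 0 := by simp [Gdet]
      simp [h0]
    · intro l hl1 hl2
      have p1 := (hpos i j l (by omega) (by omega)).ne'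
      have p2 := (hpos i j (l - 1) (by omega) (by omega)).ne'
      obtain ⟨m, rfl⟩ : ∃ m : ℕ, l = m + 1 := ⟨(l - 1).toNat, by omega⟩
      have h := ident_two n ζ a i j m
      push_cast at h
      simp only [add_sub_cancel_right] at p2 ⊢
      rw [neg_sub_neg, div_sub_div _ _ p1 p2, div_eq_div_iff (mul_ne_zero p1 p2) (mul_ne_zero p1 p2)]
      linear_combination (- (Fdet n ζ a i j (m + 1)) * (Fdet n ζ a i j m)) * h
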